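/- For every integer p ≥ 1, the number of CNATs of size 2p whose associated permutation has sign +1 equals (T_{2p} + (−1)^p T_p)/2, and the number of CNATs of size 2p whose associated permutation has sign −1 equals (T_{2p} − (−1)^p T_p)/2, where T_n is the total number of CNATs of size n. -/

import Mathlib

/-!
Formalization of complete non-ambiguous trees (CNATs).

A CNAT of size `n` is modelled as a Boolean filling `D : Fin n → Fin n → Bool`
of the `n × n` grid (`D i j = true` meaning that cell in row `i`, column `j`
is dotted; rows are numbered from the top, columns from the left, `0`-based),
satisfying the root, non-ambiguity, minimality and completeness conditions.
-/

namespace CNATf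

/-- A filling of the `n × n` grid. -/
abbrev Grid (n : ℕ) := Fin n → Fin n → Bool

/-- Cell `(i, j)` is dotted. -/
def Dotted {n : ℕ} (D : Grid n) (i j : Fin n) : Prop := D i j = true

/-- There is a dotted cell above `(i, j)` in the same column. -/
def HasDotAbove {n : ℕ} (D : Grid n) (i j : Fin n) : Prop :=
  ∃ i' : Fin n, i' < i ∧ Dotted D i' j

/-- There is a dotted cell to the left of `(i, j)` in the same row. -/
def HasDotLeft {n : ℕ} (D : Grid n) (i j : Fin n) : Prop :=
  ∃ j' : Fin n, j' < j ∧ Dotted D i j'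

/-- There is a dotted cell below `(i, j)` in the same column. -/
def HasDotBelow {n : ℕ} (D : Grid n) (i j : Fin n) : Prop :=
  ∃ i' : Fin n, i < i' ∧ Dotted D i' j

/-- There is a dotted cell to the right of `(i, j)` in the same row. -/
def HasDotRight {n : ℕ} (D : Grid n) (i j : Fin n) : Prop :=
  ∃ j' : Fin n, j < j' ∧ Dotted D i j'

/-- `D` is a complete non-ambiguous tree (CNAT) on the `n × n` grid:
root, non-ambiguity, minimality (rows and columns), completeness. -/
def IsCNAT {n : ℕ} (D : Grid n) : Prop :=
  (∀ i j : Fin n, (i : ℕ) = 0 → (j : ℕ) = 0 → Dotted D i j) ∧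
  (∀ i j : Fin n, Dotted D i j → ¬((i : ℕ) = 0 ∧ (j : ℕ) = 0) →
      Xor' (HasDotAbove D i j) (HasDotLeft D i j)) ∧
  (∀ i : Fin n, ∃ j : Fin n, Dotted D i j) ∧
  (∀ j : Fin n, ∃ i : Fin n, Dotted D i j) ∧
  (∀ i j : Fin n, Dotted D i j →
      (HasDotBelow D i j ∧ HasDotRight D i j) ∨ (¬HasDotBelow D i j ∧ ¬HasDotRight D i j))

/-- A leaf: a dotted cell with no dot below it in its column and no dot
to its right in its row. -/
def IsLeaf {n : ℕ} (D : Grid n) (i j : Fin n) : Prop :=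
  Dotted D i j ∧ ¬HasDotBelow D i j ∧ ¬HasDotRight D i j

/-- An internal dot: a dotted cell with both a dot below it in its column and
a dot to its right in its row. -/
def IsInternal {n : ℕ} (D : Grid n) (i j : Fin n) : Prop :=
  Dotted D i j ∧ HasDotBelow D i j ∧ HasDotRight D i j

/-- `p` is the nearest dotted cell above `l` in the column of `l`. -/
def ParentAbove {n : ℕ} (D : Grid n) (p l : Fin n × Fin n) : Prop :=
  p.2 = l.2 ∧ p.1 < l.1 ∧ Dotted D p.1 p.2 ∧
    ∀ k : Fin n, p.1 < k → k < l.1 → ¬Dotted D k l.2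

/-- `p` is the nearest dotted cell to the left of `l` in the row of `l`,
and there is no dotted cell above `l` in its column. -/
def ParentLeft {n : ℕ} (D : Grid n) (p l : Fin n × Fin n) : Prop :=
  p.1 = l.1 ∧ p.2 < l.2 ∧ Dotted D p.1 p.2 ∧
    (∀ k : Fin n, p.2 < k → k < l.2 → ¬Dotted D l.1 k) ∧
    ¬HasDotAbove D l.1 l.2

/-- `p` is the parent of the dot `l`: the nearest dotted cell above `l` in its
column if such a cell exists, otherwise the nearest dotted cell to its left. -/
def IsParent {n : ℕ} (D : Grid n) (p l : Fin n × Fin n) : Prop :=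
  ParentAbove D p l ∨ ParentLeft D p l

/-- `c` is the left child of the internal dot `p`: the nearest dot below `p`
in the column of `p`. -/
def IsLeftChild {n : ℕ} (D : Grid n) (p c : Fin n × Fin n) : Prop :=
  c.2 = p.2 ∧ p.1 < c.1 ∧ Dotted D c.1 c.2 ∧
    ∀ k : Fin n, p.1 < k → k < c.1 → ¬Dotted D k p.2

/-- `c` is the right child of the internal dot `p`: the nearest dot to the
right of `p` in the row of `p`. -/
def IsRightChild {n : ℕ} (D : Grid n) (p c : Fin n × Fin n) : Prop :=
  c.1 = p.1 ∧ p.2 < c.2 ∧ Dotted D c.1 c.2 ∧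
    ∀ k : Fin n, p.2 < k → k < c.2 → ¬Dotted D p.1 k

/-- A left leaf: a leaf whose parent is above it in its column. -/
def IsLeftLeaf {n : ℕ} (D : Grid n) (l : Fin n × Fin n) : Prop :=
  IsLeaf D l.1 l.2 ∧ ∃ p : Fin n × Fin n, ParentAbove D p l

/-- A right leaf: a leaf whose parent is to its left in its row. -/
def IsRightLeaf {n : ℕ} (D : Grid n) (l : Fin n × Fin n) : Prop :=
  IsLeaf D l.1 l.2 ∧ ∃ p : Fin n × Fin n, ParentLeft D p l

/-- A short leaf: a leaf whose parent lies in a cell adjacent to it. -/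
def IsShortLeaf {n : ℕ} (D : Grid n) (l : Fin n × Fin n) : Prop :=
  IsLeaf D l.1 l.2 ∧ ∃ p : Fin n × Fin n, IsParent D p l ∧
    (((p.1 : ℕ) + 1 = (l.1 : ℕ) ∧ p.2 = l.2) ∨ ((p.2 : ℕ) + 1 = (l.2 : ℕ) ∧ p.1 = l.1))

/-- A long leaf: a leaf which is not short. -/
def IsLongLeaf {n : ℕ} (D : Grid n) (l : Fin n × Fin n) : Prop :=
  IsLeaf D l.1 l.2 ∧ ¬IsShortLeaf D l

/-- All leaves of `D` are short (i.e. `D ∈ 𝒜ₙ`). -/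
def AllLeavesShort {n : ℕ} (D : Grid n) : Prop :=
  ∀ l : Fin n × Fin n, IsLeaf D l.1 l.2 → IsShortLeaf D l

/-- `π` is the permutation associated with the CNAT `D`: for every row `i`,
the leaf of row `i` lies in column `π i`. -/
def IsAssocPerm {n : ℕ} (D : Grid n) (π : Equiv.Perm (Fin n)) : Prop :=
  ∀ i : Fin n, IsLeaf D i (π i)

/-- Two left leaves `l₁`, `l₂` (with respective parents `p₁`, `p₂`) are
interacting if `r(p₁) < r(l₂) < r(l₁)` or `r(p₂) < r(l₁) < r(l₂)`. -/
def InteractingLeft {n : ℕ} (D : Grid n) (l₁ l₂ : Fin n × Fin n) : Prop :=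
  IsLeftLeaf D l₁ ∧ IsLeftLeaf D l₂ ∧
    ∃ p₁ p₂ : Fin n × Fin n, ParentAbove D p₁ l₁ ∧ ParentAbove D p₂ l₂ ∧
      ((p₁.1 < l₂.1 ∧ l₂.1 < l₁.1) ∨ (p₂.1 < l₁.1 ∧ l₁.1 < l₂.1))

/-- Two right leaves `l₁`, `l₂` (with respective parents `p₁`, `p₂`) are
interacting if `c(p₁) < c(l₂) < c(l₁)` or `c(p₂) < c(l₁) < c(l₂)`. -/
def InteractingRight {n : ℕ} (D : Grid n) (l₁ l₂ : Fin n × Fin n) : Prop :=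
  IsRightLeaf D l₁ ∧ IsRightLeaf D l₂ ∧
    ∃ p₁ p₂ : Fin n × Fin n, ParentLeft D p₁ l₁ ∧ ParentLeft D p₂ l₂ ∧
      ((p₁.2 < l₂.2 ∧ l₂.2 < l₁.2) ∨ (p₂.2 < l₁.2 ∧ l₁.2 < l₂.2))

/-- Two leaves are interacting (as left leaves or as right leaves). -/
def Interacting {n : ℕ} (D : Grid n) (l₁ l₂ : Fin n × Fin n) : Prop :=
  InteractingLeft D l₁ l₂ ∨ InteractingRight D l₁ l₂

/-- The switch `S(T, l₁, l₂)` of two interacting leaves: `l₁` and `l₂` are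
erased and replaced by dots at `(r(l₂), c(l₁))` and `(r(l₁), c(l₂))`
(for left leaves this exchanges their row labels, for right leaves this
exchanges their column labels; both descriptions yield the same filling). -/
def switchLeaves {n : ℕ} (D : Grid n) (l₁ l₂ : Fin n × Fin n) : Grid n := fun i j =>
  if (i = l₂.1 ∧ j = l₁.2) ∨ (i = l₁.1 ∧ j = l₂.2) then true
  else if (i = l₁.1 ∧ j = l₁.2) ∨ (i = l₂.1 ∧ j = l₂.2) then false
  else D i j

/-!
The signs of the CNATs of size `2 * p` are summed with the help of sign-reversing involutions.
Exchanging the rows of two interacting left leaves that have no left leaf in between reverses the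
sign, and so does the transposed operation on right leaves. Neither affects the interactions of the
leaves of the other kind, so that only the CNATs without interacting leaves survive. In such a tree
no left leaf lies in the first row and no two lie in consecutive rows; the same holds for right
leaves and columns. Hence there are at most `p` leaves of either kind. As there are `2 * p` leaves
altogether, there are exactly `p` of either kind and, numbering from `0`, they fill the odd rows
and the odd columns. This forces the leaves to come in pairs of siblings adjacent to their common
parent, and pruning all of them is a bijection onto the CNATs of size `p`. If `π` is associated
with the pruned tree, the permutation of the original tree sends `2k` to `2 π(k) + 1` and `2k + 1`
to `2 π(k)`, so that its sign is `sign π ^ 2 * (-1) ^ p = (-1) ^ p`.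
-/

section Transpose

variable {n : ℕ} {D : Grid n} {i j : Fin n}

/-- The reflection of a filling in its main diagonal, which exchanges left and right leaves. -/
def Grid.transpose (D : Grid n) : Grid n := fun i j => D j i

theorem isLeaf_transpose : IsLeaf D.transpose i j ↔ IsLeaf D j i :=
  and_congr_right fun _ => and_comm

theorem IsCNAT.transpose (hD : IsCNAT D) : IsCNAT D.transpose := by
  obtain ⟨root, nonambiguous, rows, columns, complete⟩ := hD
  exact ⟨fun i j hi hj => root j i hj hi,
    fun i j hd hne => (nonambiguous j i hd (mt And.symm hne)).symm, columns, rows,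
    fun i j hd => (complete j i hd).imp And.symm And.symm⟩

end Transpose

section Leaves

variable {n : ℕ} {D : Grid n} {i i' j j' : Fin n}

theorem Grid.ext_dotted {D' : Grid n} (h : ∀ i j, Dotted D i j ↔ Dotted D' i j) : D = D' :=
  funext₂ fun i j => Bool.eq_iff_iff.2 (h i j)

theorem IsCNAT.not_hasDotLeft (hD : IsCNAT D) (hd : Dotted D i j) (ha : HasDotAbove D i j) :
    ¬HasDotLeft D i j := by
  obtain ⟨k, hk, -⟩ := id ha
  have hne : ¬((i : ℕ) = 0 ∧ (j : ℕ) = 0) := fun h => by simp [Fin.lt_def, h.1] at hk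
  rcases hD.2.1 i j hd hne with h | h
  · exact h.2
  · exact absurd ha h.2

theorem IsCNAT.hasDotBelow_iff_hasDotRight (hD : IsCNAT D) (hd : Dotted D i j) :
    HasDotBelow D i j ↔ HasDotRight D i j := by
  rcases hD.2.2.2.2 i j hd with h | h
  · exact iff_of_true h.1 h.2
  · exact iff_of_false h.1 h.2

theorem IsCNAT.exists_isLeaf_row (hD : IsCNAT D) (i : Fin n) : ∃ j, IsLeaf D i j := by
  obtain ⟨j, hj, hmax⟩ := wellFounded_gt.has_min {j | Dotted D i j} (hD.2.2.1 i)
  have hright : ¬HasDotRight D i j := fun ⟨k, hk, hd⟩ => hmax k hd hk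
  exact ⟨j, hj, mt (hD.hasDotBelow_iff_hasDotRight hj).1 hright, hright⟩

theorem IsLeaf.le_of_dotted_row (h : IsLeaf D i j) (hd : Dotted D i j') : j' ≤ j :=
  not_lt.1 fun hlt => h.2.2 ⟨j', hlt, hd⟩

theorem IsLeaf.le_of_dotted_column (h : IsLeaf D i j) (hd : Dotted D i' j) : i' ≤ i :=
  not_lt.1 fun hlt => h.2.1 ⟨i', hlt, hd⟩

theorem IsLeaf.column_unique (h : IsLeaf D i j) (h' : IsLeaf D i j') : j = j' :=
  le_antisymm (h'.le_of_dotted_row h.1) (h.le_of_dotted_row h'.1)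

theorem IsLeaf.row_unique (h : IsLeaf D i j) (h' : IsLeaf D i' j) : i = i' :=
  le_antisymm (h'.le_of_dotted_column h.1) (h.le_of_dotted_column h'.1)

theorem IsLeaf.eq_of_dotted_row (h : IsLeaf D i j) (hD : IsCNAT D) (ha : HasDotAbove D i j)
    (hd : Dotted D i j') : j' = j :=
  (h.le_of_dotted_row hd).eq_of_not_lt fun hlt => hD.not_hasDotLeft h.1 ha ⟨j', hlt, hd⟩

theorem IsCNAT.not_isLeaf_root (hD : IsCNAT D) (hn : n ≠ 1) (hi : (i : ℕ) = 0)
    (hj : (j : ℕ) = 0) : ¬IsLeaf D i j := by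
  intro hleaf
  have hlt : 1 < n := by omega
  obtain ⟨c, hc, hmin⟩ := wellFounded_lt.has_min {c | Dotted D ⟨1, hlt⟩ c} (hD.2.2.1 _)
  have hleft : ¬HasDotLeft D ⟨1, hlt⟩ c := fun ⟨k, hk, hd⟩ => hmin k hd hk
  obtain ⟨r, hr, hd⟩ : HasDotAbove D ⟨1, hlt⟩ c :=
    (hD.2.1 _ _ hc (by simp)).resolve_right (fun h => hleft h.1) |>.1
  obtain rfl : r = i := Fin.ext (by rw [Fin.lt_def] at hr; simp only at hr; omega)
  obtain rfl : c = j := Fin.ext (by have := Fin.le_def.1 (hleaf.le_of_dotted_row hd); omega)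
  exact hleaf.2.1 ⟨_, hr, hc⟩

theorem IsLeaf.hasDotLeft_iff (h : IsLeaf D i j) (hD : IsCNAT D) (hn : n ≠ 1) :
    HasDotLeft D i j ↔ ¬HasDotAbove D i j :=
  (xor_iff_not_iff'.1 (hD.2.1 i j h.1 fun h0 => hD.not_isLeaf_root hn h0.1 h0.2 h)).symm

end Leaves

section Sign

variable {n : ℕ} {D : Grid n} {π ρ : Equiv.Perm (Fin n)}

theorem IsCNAT.exists_isAssocPerm (hD : IsCNAT D) : ∃ π, IsAssocPerm D π := by
  choose f hf using hD.exists_isLeaf_row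
  have hinj : f.Injective := fun a b hab => (hf a).row_unique (hab ▸ hf b)
  exact ⟨Equiv.ofBijective f (Finite.injective_iff_bijective.1 hinj), hf⟩

theorem IsAssocPerm.unique (hπ : IsAssocPerm D π) (hρ : IsAssocPerm D ρ) : π = ρ :=
  Equiv.ext fun i => (hπ i).column_unique (hρ i)

theorem IsAssocPerm.transpose (hπ : IsAssocPerm D π) : IsAssocPerm D.transpose π⁻¹ := fun i =>
  isLeaf_transpose.2 (by simpa using hπ (π⁻¹ i))

/-- The sign of the permutation associated with `D`; it is meaningful only if there is such a
permutation, for instance for a CNAT. -/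
noncomputable def Grid.sign (D : Grid n) : ℤˣ :=
  Equiv.Perm.sign (Classical.epsilon (IsAssocPerm D))

theorem IsAssocPerm.sign_eq (hπ : IsAssocPerm D π) : D.sign = Equiv.Perm.sign π :=
  congrArg Equiv.Perm.sign ((Classical.epsilon_spec ⟨π, hπ⟩).unique hπ)

theorem IsCNAT.exists_isAssocPerm_sign_iff (hD : IsCNAT D) {ε : ℤˣ} :
    (∃ π, IsAssocPerm D π ∧ Equiv.Perm.sign π = ε) ↔ D.sign = ε := by
  obtain ⟨π, hπ⟩ := hD.exists_isAssocPerm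
  exact ⟨fun ⟨ρ, hρ, hε⟩ => hρ.sign_eq.trans hε, fun hε => ⟨π, hπ, hπ.sign_eq.symm.trans hε⟩⟩

theorem IsCNAT.sign_transpose (hD : IsCNAT D) : D.transpose.sign = D.sign := by
  obtain ⟨π, hπ⟩ := hD.exists_isAssocPerm
  rw [hπ.sign_eq, hπ.transpose.sign_eq, Equiv.Perm.sign_inv]

open Classical in
/-- The finite set of CNATs of size `n`. -/
noncomputable def cnats (n : ℕ) : Finset (Grid n) := {D | IsCNAT D}

theorem mem_cnats : D ∈ cnats n ↔ IsCNAT D := by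
  simp [cnats]

theorem natCard_isCNAT (n : ℕ) : Nat.card {D : Grid n // IsCNAT D} = (cnats n).card := by
  classical
  rw [Nat.card_eq_fintype_card, Fintype.card_subtype, cnats]

theorem two_mul_natCard_sign_eq (n : ℕ) (ε : ℤˣ) :
    2 * (Nat.card {D : Grid n // IsCNAT D ∧
        ∃ π, IsAssocPerm D π ∧ Equiv.Perm.sign π = ε} : ℤ) =
      Nat.card {D : Grid n // IsCNAT D} + ε * ∑ D ∈ cnats n, (D.sign : ℤ) := by
  classical
  have hcard : Nat.card {D : Grid n // IsCNAT D ∧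
      ∃ π, IsAssocPerm D π ∧ Equiv.Perm.sign π = ε} = ((cnats n).filter (·.sign = ε)).card := by
    rw [Nat.card_eq_fintype_card, Fintype.card_subtype, cnats, Finset.filter_filter]
    exact congrArg Finset.card <| Finset.filter_congr fun D _ =>
      and_congr_right fun hD => hD.exists_isAssocPerm_sign_iff
  have hindicator (D : Grid n) : 2 * (if D.sign = ε then 1 else 0 : ℤ) = 1 + ε * D.sign := by
    rcases Int.units_eq_one_or D.sign with hs | hs <;>
      rcases Int.units_eq_one_or ε with rfl | rfl <;> simp [hs]
  rw [hcard, natCard_isCNAT, Finset.card_filter, Finset.mul_sum, Finset.card_eq_sum_ones]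
  push_cast
  rw [Finset.mul_sum, ← Finset.sum_add_distrib]
  exact Finset.sum_congr rfl fun D _ => hindicator D

end Sign

section LeftLeaves

variable {n : ℕ} {D : Grid n} {a b i j r : Fin n}

/-- Row `r` contains a left leaf, the parent of which lies in row `a`. In a CNAT a row contains at
most one left leaf, so that left leaves are identified with their rows. -/
def HasLeftLeafFrom (D : Grid n) (r a : Fin n) : Prop :=
  ∃ j, IsLeaf D r j ∧ ParentAbove D (a, j) (r, j)

/-- `D` has a pair of interacting left leaves. -/
def HasInteractingLeft (D : Grid n) : Prop :=
  ∃ l₁ l₂, InteractingLeft D l₁ l₂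

theorem HasDotAbove.exists_parentAbove (h : HasDotAbove D i j) :
    ∃ a, ParentAbove D (a, j) (i, j) := by
  obtain ⟨a, ⟨hai, hd⟩, hmax⟩ := wellFounded_gt.has_min {a | a < i ∧ Dotted D a j} h
  exact ⟨a, rfl, hai, hd, fun k hak hki hk => hmax k ⟨hki, hk⟩ hak⟩

theorem IsLeaf.exists_hasLeftLeafFrom_iff (h : IsLeaf D i j) :
    (∃ a, HasLeftLeafFrom D i a) ↔ HasDotAbove D i j := by
  constructor
  · rintro ⟨a, k, hk, hp⟩
    obtain rfl := h.column_unique hk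
    exact ⟨a, hp.2.1, hp.2.2.1⟩
  · intro ha
    obtain ⟨a, hp⟩ := ha.exists_parentAbove
    exact ⟨a, j, h, hp⟩

theorem IsLeaf.exists_hasLeftLeafFrom_transpose_iff (h : IsLeaf D i j) (hD : IsCNAT D)
    (hn : n ≠ 1) :
    (∃ b, HasLeftLeafFrom D.transpose j b) ↔ ¬∃ a, HasLeftLeafFrom D i a := by
  rw [h.exists_hasLeftLeafFrom_iff, (isLeaf_transpose.2 h).exists_hasLeftLeafFrom_iff,
    ← h.hasDotLeft_iff hD hn]
  rfl

theorem HasLeftLeafFrom.lt (h : HasLeftLeafFrom D r a) : a < r :=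
  h.choose_spec.2.2.1

theorem HasLeftLeafFrom.ne_of_parent (h : HasLeftLeafFrom D r a) (hD : IsCNAT D) {s : Fin n}
    (hs : HasLeftLeafFrom D s b) : a ≠ s := by
  rintro rfl
  obtain ⟨j, hj, hp⟩ := h
  obtain ⟨k, hk, hq⟩ := hs
  obtain rfl : j = k := hk.eq_of_dotted_row hD ⟨b, hq.2.1, hq.2.2.1⟩ hp.2.2.1
  exact hk.2.1 ⟨r, hp.2.1, hj.1⟩

theorem hasInteractingLeft_iff :
    HasInteractingLeft D ↔
      ∃ q r b a, HasLeftLeafFrom D q b ∧ HasLeftLeafFrom D r a ∧ a < q ∧ q < r := by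
  have hasLeftLeafFrom {l p : Fin n × Fin n} (hl : IsLeaf D l.1 l.2) (hp : ParentAbove D p l) :
      HasLeftLeafFrom D l.1 p.1 :=
    ⟨l.2, hl, rfl, hp.2.1, hp.1 ▸ hp.2.2.1, hp.2.2.2⟩
  constructor
  · rintro ⟨l₁, l₂, h₁, h₂, p₁, p₂, hp₁, hp₂, h | h⟩
    · exact ⟨_, _, _, _, hasLeftLeafFrom h₂.1 hp₂, hasLeftLeafFrom h₁.1 hp₁, h⟩
    · exact ⟨_, _, _, _, hasLeftLeafFrom h₁.1 hp₁, hasLeftLeafFrom h₂.1 hp₂, h⟩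
  · rintro ⟨q, r, b, a, ⟨k, hk, hq⟩, ⟨j, hj, hr⟩, h⟩
    exact ⟨(q, k), (r, j), ⟨hk, _, hq⟩, ⟨hj, _, hr⟩, _, _, hq, hr, Or.inr h⟩

end LeftLeaves

section RowPermutation

variable {n : ℕ} {D : Grid n} {s : Equiv.Perm (Fin n)} {a i j r : Fin n}

/-- The filling whose `i`-th row is the `s i`-th row of `D`. -/
def Grid.permRows (D : Grid n) (s : Equiv.Perm (Fin n)) : Grid n := fun i => D (s i)

/-- Permuting the rows of `D` by `s` does not change the vertical order of the dots in any
column. -/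
def PreservesColumns (s : Equiv.Perm (Fin n)) (D : Grid n) : Prop :=
  ∀ j, StrictMonoOn s {i | Dotted (D.permRows s) i j}

namespace PreservesColumns

theorem hasDotAbove_iff (hs : PreservesColumns s D) (hd : Dotted (D.permRows s) i j) :
    HasDotAbove (D.permRows s) i j ↔ HasDotAbove D (s i) j :=
  s.exists_congr fun _ => and_congr_left fun hk => ((hs j).lt_iff_lt hk hd).symm

theorem hasDotBelow_iff (hs : PreservesColumns s D) (hd : Dotted (D.permRows s) i j) :
    HasDotBelow (D.permRows s) i j ↔ HasDotBelow D (s i) j :=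
  s.exists_congr fun _ => and_congr_left fun hk => ((hs j).lt_iff_lt hd hk).symm

theorem isLeaf_iff (hs : PreservesColumns s D) :
    IsLeaf (D.permRows s) i j ↔ IsLeaf D (s i) j :=
  and_congr_right fun hd => and_congr_left fun _ => not_congr (hs.hasDotBelow_iff hd)

theorem parentAbove_iff (hs : PreservesColumns s D) (hd : Dotted (D.permRows s) i j) :
    ParentAbove (D.permRows s) (a, j) (i, j) ↔ ParentAbove D (s a, j) (s i, j) := by
  have between (ha : Dotted (D.permRows s) a j) :
      (∀ k, a < k → k < i → ¬Dotted (D.permRows s) k j) ↔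
        ∀ k, s a < k → k < s i → ¬Dotted D k j :=
    s.forall_congr fun k => by
      by_cases hk : Dotted (D.permRows s) k j
      · rw [(hs j).lt_iff_lt ha hk, (hs j).lt_iff_lt hk hd]
        rfl
      · exact iff_of_true (fun _ _ => hk) (fun _ _ => hk)
  exact ⟨fun ⟨_, hlt, ha, hk⟩ => ⟨rfl, ((hs j).lt_iff_lt ha hd).2 hlt, ha, (between ha).1 hk⟩,
    fun ⟨_, hlt, ha, hk⟩ => ⟨rfl, ((hs j).lt_iff_lt ha hd).1 hlt, ha, (between ha).2 hk⟩⟩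

theorem hasLeftLeafFrom_iff (hs : PreservesColumns s D) :
    HasLeftLeafFrom (D.permRows s) r a ↔ HasLeftLeafFrom D (s r) (s a) :=
  exists_congr fun _ => by
    rw [hs.isLeaf_iff]
    exact and_congr_right fun hleaf => hs.parentAbove_iff hleaf.1

theorem hasLeftLeafFrom_transpose_iff (hs : PreservesColumns s D) :
    HasLeftLeafFrom (D.permRows s).transpose r a ↔ HasLeftLeafFrom D.transpose r a :=
  s.exists_congr fun i => by
    rw [isLeaf_transpose, isLeaf_transpose, hs.isLeaf_iff]
    simp only [ParentAbove, true_and]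
    rfl

theorem isCNAT (hs : PreservesColumns s D) (h0 : ∀ i, (s i : ℕ) = 0 ↔ (i : ℕ) = 0)
    (hD : IsCNAT D) : IsCNAT (D.permRows s) := by
  obtain ⟨root, nonambiguous, rows, columns, complete⟩ := hD
  refine ⟨fun i j hi hj => root _ j ((h0 i).2 hi) hj, fun i j hd hne => ?_, fun i => rows (s i),
    fun j => (s.exists_congr fun i => Iff.rfl).2 (columns j), fun i j hd => ?_⟩
  · rw [hs.hasDotAbove_iff hd]
    exact nonambiguous (s i) j hd (by rwa [h0])
  · rw [hs.hasDotBelow_iff hd]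
    exact complete (s i) j hd

theorem isAssocPerm (hs : PreservesColumns s D) {π : Equiv.Perm (Fin n)}
    (hπ : IsAssocPerm D π) : IsAssocPerm (D.permRows s) (π * s) := fun i =>
  hs.isLeaf_iff.2 (hπ (s i))

end PreservesColumns

end RowPermutation

section Switch

variable {n : ℕ} {D : Grid n} {a k q q' r r' : Fin n}

/-- The left leaves of rows `q < r` are interacting, and there is no left leaf in the rows
between them. -/
def IsSwitchPair (D : Grid n) (q r : Fin n) : Prop :=
  q < r ∧ (∃ b, HasLeftLeafFrom D q b) ∧ (∃ a < q, HasLeftLeafFrom D r a) ∧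
    ∀ k, q < k → k < r → ¬∃ c, HasLeftLeafFrom D k c

/-- The lowest switch pair of `D`. -/
def IsLastSwitchPair (D : Grid n) (q r : Fin n) : Prop :=
  IsSwitchPair D q r ∧ ∀ q' r', IsSwitchPair D q' r' → r' ≤ r

theorem HasInteractingLeft.exists_isSwitchPair (h : HasInteractingLeft D) :
    ∃ q r, IsSwitchPair D q r := by
  obtain ⟨q₀, r, b, a, hq₀, hr, haq, hqr⟩ := hasInteractingLeft_iff.1 h
  obtain ⟨q, ⟨hq, hlt⟩, hmax⟩ := wellFounded_gt.has_min
    {q | (∃ b, HasLeftLeafFrom D q b) ∧ q < r} ⟨q₀, ⟨b, hq₀⟩, hqr⟩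
  have hle : q₀ ≤ q := not_lt.1 (hmax q₀ ⟨⟨b, hq₀⟩, hqr⟩)
  exact ⟨q, r, hlt, hq, ⟨a, haq.trans_le hle, hr⟩, fun k hqk hkr hk => hmax k ⟨hk, hkr⟩ hqk⟩

theorem IsSwitchPair.hasInteractingLeft (h : IsSwitchPair D q r) : HasInteractingLeft D := by
  obtain ⟨hlt, ⟨b, hq⟩, ⟨a, haq, hr⟩, -⟩ := h
  exact hasInteractingLeft_iff.2 ⟨q, r, b, a, hq, hr, haq, hlt⟩

theorem HasInteractingLeft.exists_isLastSwitchPair (h : HasInteractingLeft D) :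
    ∃ q r, IsLastSwitchPair D q r := by
  obtain ⟨q₀, r₀, h₀⟩ := h.exists_isSwitchPair
  obtain ⟨r, ⟨q, hqr⟩, hmax⟩ := wellFounded_gt.has_min {r | ∃ q, IsSwitchPair D q r} ⟨r₀, q₀, h₀⟩
  exact ⟨q, r, hqr, fun q' r' h' => not_lt.1 (hmax r' ⟨q', h'⟩)⟩

theorem IsSwitchPair.unique_left (h : IsSwitchPair D q r) (h' : IsSwitchPair D q' r) :
    q = q' :=
  le_antisymm (not_lt.1 fun hlt => h'.2.2.2 q hlt h.1 h.2.1)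
    (not_lt.1 fun hlt => h.2.2.2 q' hlt h'.1 h'.2.1)

theorem IsLastSwitchPair.unique (h : IsLastSwitchPair D q r) (h' : IsLastSwitchPair D q' r') :
    q = q' ∧ r = r' := by
  obtain rfl := le_antisymm (h'.2 q r h.1) (h.2 q' r' h'.1)
  exact ⟨h.1.unique_left h'.1, rfl⟩

theorem IsSwitchPair.preservesColumns (h : IsSwitchPair D q r) (hD : IsCNAT D) :
    PreservesColumns (Equiv.swap q r) D := by
  obtain ⟨hlt, ⟨b, j', hj', hp'⟩, ⟨a, haq, j, hj, hp⟩, -⟩ := h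
  have row_q : ∀ k, Dotted D q k → k = j' := fun k =>
    hj'.eq_of_dotted_row hD ⟨b, hp'.2.1, hp'.2.2.1⟩
  have row_r : ∀ k, Dotted D r k → k = j := fun k =>
    hj.eq_of_dotted_row hD ⟨a, hp.2.1, hp.2.2.1⟩
  have column_q : ∀ x, Dotted D x j' → x ≤ q := fun x => hj'.le_of_dotted_column
  have column_r : ∀ x, Dotted D x j → x < q ∨ x = r := fun x hx => by
    have hxr := hj.le_of_dotted_column hx
    have hgap := hp.2.2.2 x
    grind
  intro k x hx y hy hxy
  simp only [Set.mem_ofPred_eq, Dotted, Grid.permRows, Equiv.swap_apply_def] at *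
  grind

theorem IsSwitchPair.swap_val_eq_zero_iff (h : IsSwitchPair D q r) (i : Fin n) :
    (Equiv.swap q r i : ℕ) = 0 ↔ (i : ℕ) = 0 := by
  obtain ⟨hlt, ⟨b, hb⟩, -⟩ := h
  have hbq := hb.lt
  rw [Equiv.swap_apply_def]
  split_ifs <;> simp only [Fin.lt_def, Fin.ext_iff] at * <;> omega

theorem IsSwitchPair.hasLeftLeafFrom_permRows_iff (h : IsSwitchPair D q r) (hD : IsCNAT D) :
    HasLeftLeafFrom (D.permRows (Equiv.swap q r)) k a ↔
      HasLeftLeafFrom D (Equiv.swap q r k) a := by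
  have swap_parent {x c : Fin n} (hx : HasLeftLeafFrom D x c) : Equiv.swap q r c = c := by
    obtain ⟨-, ⟨_, hq⟩, ⟨_, -, hr⟩, -⟩ := h
    exact Equiv.swap_apply_of_ne_of_ne (hx.ne_of_parent hD hq) (hx.ne_of_parent hD hr)
  rw [(h.preservesColumns hD).hasLeftLeafFrom_iff]
  constructor <;> intro hx
  · rwa [← swap_parent hx, Equiv.swap_apply_self] at hx
  · rwa [swap_parent hx]

theorem IsSwitchPair.exists_hasLeftLeafFrom_permRows_iff (h : IsSwitchPair D q r)
    (hD : IsCNAT D) :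
    (∃ c, HasLeftLeafFrom (D.permRows (Equiv.swap q r)) k c) ↔ ∃ c, HasLeftLeafFrom D k c := by
  obtain ⟨-, hq, ⟨a, -, hr⟩, -⟩ := id h
  simp only [h.hasLeftLeafFrom_permRows_iff hD]
  rcases eq_or_ne k q with rfl | hkq
  · rw [Equiv.swap_apply_left]
    exact iff_of_true ⟨a, hr⟩ hq
  rcases eq_or_ne k r with rfl | hkr
  · rw [Equiv.swap_apply_right]
    exact iff_of_true hq ⟨a, hr⟩
  · rw [Equiv.swap_apply_of_ne_of_ne hkq hkr]

theorem IsLastSwitchPair.permRows (h : IsLastSwitchPair D q r) (hD : IsCNAT D) :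
    IsLastSwitchPair (D.permRows (Equiv.swap q r)) q r := by
  obtain ⟨hlt, ⟨b, hq⟩, -, hbetween⟩ := id h.1
  have hrow {k : Fin n} := h.1.exists_hasLeftLeafFrom_permRows_iff hD (k := k)
  constructor
  · exact ⟨hlt, hrow.2 ⟨b, hq⟩,
      ⟨b, hq.lt, (h.1.hasLeftLeafFrom_permRows_iff hD).2 (by rwa [Equiv.swap_apply_right])⟩,
      fun k hqk hkr => mt hrow.1 (hbetween k hqk hkr)⟩
  · rintro q' r' ⟨hlt', hq', ⟨a', haq', hr'⟩, hbetween'⟩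
    by_contra! hrr'
    rw [h.1.hasLeftLeafFrom_permRows_iff hD,
      Equiv.swap_apply_of_ne_of_ne (hlt.trans hrr').ne' hrr'.ne'] at hr'
    exact hrr'.not_ge <| h.2 q' r' ⟨hlt', hrow.1 hq', ⟨a', haq', hr'⟩,
      fun k hqk hkr => mt hrow.2 (hbetween' k hqk hkr)⟩

open Classical in
/-- The switch of the lowest pair of adjacent interacting left leaves, by exchanging their rows;
a filling without interacting left leaves is left unchanged. -/
noncomputable def Grid.switchLast (D : Grid n) : Grid n :=
  if h : ∃ q : Fin n × Fin n, IsLastSwitchPair D q.1 q.2 then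
    D.permRows (Equiv.swap h.choose.1 h.choose.2)
  else D

theorem IsLastSwitchPair.switchLast_eq (h : IsLastSwitchPair D q r) :
    D.switchLast = D.permRows (Equiv.swap q r) := by
  have hex : ∃ q : Fin n × Fin n, IsLastSwitchPair D q.1 q.2 := ⟨(q, r), h⟩
  obtain ⟨hq, hr⟩ := hex.choose_spec.unique h
  rw [Grid.switchLast, dif_pos hex, hq, hr]

namespace HasInteractingLeft

theorem hasInteractingLeft_switchLast (h : HasInteractingLeft D) (hD : IsCNAT D) :
    HasInteractingLeft D.switchLast := by
  obtain ⟨q, r, hqr⟩ := h.exists_isLastSwitchPair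
  exact hqr.switchLast_eq ▸ (hqr.permRows hD).1.hasInteractingLeft

theorem isCNAT_switchLast (h : HasInteractingLeft D) (hD : IsCNAT D) :
    IsCNAT D.switchLast := by
  obtain ⟨q, r, hqr⟩ := h.exists_isLastSwitchPair
  exact hqr.switchLast_eq ▸ (hqr.1.preservesColumns hD).isCNAT hqr.1.swap_val_eq_zero_iff hD

theorem switchLast_switchLast (h : HasInteractingLeft D) (hD : IsCNAT D) :
    D.switchLast.switchLast = D := by
  obtain ⟨q, r, hqr⟩ := h.exists_isLastSwitchPair
  rw [hqr.switchLast_eq, (hqr.permRows hD).switchLast_eq]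
  funext i
  simp only [Grid.permRows, Equiv.swap_apply_self]

theorem sign_switchLast (h : HasInteractingLeft D) (hD : IsCNAT D) :
    D.switchLast.sign = -D.sign := by
  obtain ⟨q, r, hqr⟩ := h.exists_isLastSwitchPair
  obtain ⟨π, hπ⟩ := hD.exists_isAssocPerm
  rw [hqr.switchLast_eq, ((hqr.1.preservesColumns hD).isAssocPerm hπ).sign_eq, hπ.sign_eq,
    Equiv.Perm.sign_mul, Equiv.Perm.sign_swap hqr.1.1.ne, mul_neg_one]

theorem transpose_switchLast_iff (h : HasInteractingLeft D) (hD : IsCNAT D) :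
    HasInteractingLeft D.switchLast.transpose ↔ HasInteractingLeft D.transpose := by
  obtain ⟨q, r, hqr⟩ := h.exists_isLastSwitchPair
  simp only [hqr.switchLast_eq, hasInteractingLeft_iff,
    (hqr.1.preservesColumns hD).hasLeftLeafFrom_transpose_iff]

end HasInteractingLeft

theorem sum_sign_eq_zero_of_switchLast_mem {S : Finset (Grid n)}
    (hcnat : ∀ D ∈ S, IsCNAT D) (hinteracting : ∀ D ∈ S, HasInteractingLeft D)
    (hswitch : ∀ D ∈ S, D.switchLast ∈ S) : ∑ D ∈ S, (D.sign : ℤ) = 0 := by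
  have hsign : ∀ D ∈ S, D.switchLast.sign = -D.sign := fun D hD =>
    (hinteracting D hD).sign_switchLast (hcnat D hD)
  refine Finset.sum_involution (fun D _ => D.switchLast) (fun D hD => ?_) (fun D hD _ heq => ?_)
    hswitch fun D hD => (hinteracting D hD).switchLast_switchLast (hcnat D hD)
  · rw [hsign D hD, Units.val_neg, add_neg_cancel]
  · have := hsign D hD
    rw [heq] at this
    exact units_ne_neg_self _ this

/-- No two leaves of `D` are interacting. Interacting right leaves are interacting left leaves of
the transpose. -/
def IsNonInteracting (D : Grid n) : Prop :=
  ¬HasInteractingLeft D ∧ ¬HasInteractingLeft D.transpose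

theorem IsNonInteracting.transpose (h : IsNonInteracting D) : IsNonInteracting D.transpose :=
  h.symm

open Classical in
theorem sum_sign_cnats (n : ℕ) :
    ∑ D ∈ cnats n, (D.sign : ℤ) = ∑ D ∈ cnats n with IsNonInteracting D, (D.sign : ℤ) := by
  have hleft : ∑ D ∈ cnats n with HasInteractingLeft D, (D.sign : ℤ) = 0 := by
    apply sum_sign_eq_zero_of_switchLast_mem <;>
      simp only [Finset.mem_filter, mem_cnats] <;> rintro D ⟨hD, h⟩
    exacts [hD, h, ⟨h.isCNAT_switchLast hD, h.hasInteractingLeft_switchLast hD⟩]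
  have hright : ∑ D ∈ cnats n with ¬HasInteractingLeft D ∧ HasInteractingLeft D.transpose,
      (D.sign : ℤ) = 0 :=
    calc
      _ = ∑ D ∈ cnats n with HasInteractingLeft D ∧ ¬HasInteractingLeft D.transpose,
          (D.sign : ℤ) := by
        refine Finset.sum_nbij' Grid.transpose Grid.transpose ?_ ?_ (fun _ _ => rfl)
          (fun _ _ => rfl) ?_ <;>
          simp only [Finset.mem_filter, mem_cnats]
        · exact fun D ⟨hD, h⟩ => ⟨hD.transpose, h.symm⟩
        · exact fun D ⟨hD, h⟩ => ⟨hD.transpose, h.symm⟩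
        · exact fun D ⟨hD, _⟩ => by rw [hD.sign_transpose]
      _ = 0 := by
        apply sum_sign_eq_zero_of_switchLast_mem <;>
          simp only [Finset.mem_filter, mem_cnats] <;> rintro D ⟨hD, h, ht⟩
        exacts [hD, h, ⟨h.isCNAT_switchLast hD, h.hasInteractingLeft_switchLast hD,
          mt (h.transpose_switchLast_iff hD).1 ht⟩]
  rw [← Finset.sum_filter_add_sum_filter_not (cnats n) HasInteractingLeft, hleft, zero_add,
    ← Finset.sum_filter_add_sum_filter_not _ fun D : Grid n => HasInteractingLeft D.transpose,
    Finset.filter_filter, Finset.filter_filter, hright, zero_add]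
  exact Finset.sum_congr (Finset.filter_congr fun _ _ => Iff.rfl) fun _ _ => rfl

end Switch

section Counting

variable {n : ℕ} {A : Finset (Fin n)}

/-- The indices of `A` are nonzero and no two of them are consecutive. -/
def IsSparse (A : Finset (Fin n)) : Prop :=
  (∀ i ∈ A, (i : ℕ) ≠ 0) ∧ ∀ i ∈ A, ∀ j ∈ A, (j : ℕ) ≠ i + 1

open Finset in
theorem IsSparse.card_union (hA : IsSparse A) :
    #{i | i ∈ A ∨ ∃ j ∈ A, (j : ℕ) = i + 1} = 2 * #A := by
  have hpred : #{i : Fin n | ∃ j ∈ A, (j : ℕ) = i + 1} = #A := by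
    refine (card_bij (fun i _ => ⟨i - 1, by omega⟩) (fun i hi => ?_) (fun i hi j hj hij => ?_)
      fun i hi => ?_).symm
    · have := hA.1 i hi
      simp only [mem_filter_univ]
      exact ⟨i, hi, by omega⟩
    · have := hA.1 i hi
      have := hA.1 j hj
      simp only [Fin.mk.injEq] at hij
      omega
    · obtain ⟨j, hj, hji⟩ := (mem_filter_univ i).1 hi
      exact ⟨j, hj, Fin.ext (by simp [hji])⟩
  rw [filter_or, card_union_of_disjoint, hpred, filter_univ_mem, two_mul]
  exact disjoint_filter.2 fun i _ hi ⟨j, hj, hji⟩ => hA.2 i hi j hj hji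

theorem IsSparse.two_mul_card_le (hA : IsSparse A) : 2 * A.card ≤ n := by
  rw [← hA.card_union]
  exact (Finset.card_le_univ _).trans_eq (Fintype.card_fin n)

theorem IsSparse.mem_iff_odd (hA : IsSparse A) (hcard : 2 * A.card = n) (i : Fin n) :
    i ∈ A ↔ Odd (i : ℕ) := by
  have hcover : ∀ i, i ∈ A ∨ ∃ j ∈ A, (j : ℕ) = i + 1 := by
    have := (Finset.card_eq_iff_eq_univ _).1
      (hA.card_union.trans (hcard.trans (Fintype.card_fin n).symm))
    exact fun i => (Finset.mem_filter_univ i).1 (this ▸ Finset.mem_univ i)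
  obtain ⟨m, hm⟩ := i
  induction m with
  | zero => simpa using fun h => hA.1 _ h rfl
  | succ m ih =>
    have hlt : m < n := m.lt_of_succ_lt hm
    refine Iff.trans ⟨fun h h' => hA.2 _ h' _ h rfl, fun h => ?_⟩
      ((not_congr (ih hlt)).trans Nat.odd_add_one.symm)
    obtain ⟨j, hj, hjm⟩ := (hcover ⟨m, hlt⟩).resolve_left h
    rwa [show (⟨m + 1, hm⟩ : Fin n) = j from Fin.ext hjm.symm]

end Counting

section LeftLeafRows

variable {n : ℕ} {D : Grid n}

open Classical in
/-- The rows containing a left leaf. -/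
noncomputable def leftLeafRows (D : Grid n) : Finset (Fin n) :=
  {r | ∃ a, HasLeftLeafFrom D r a}

theorem mem_leftLeafRows {r : Fin n} : r ∈ leftLeafRows D ↔ ∃ a, HasLeftLeafFrom D r a := by
  simp [leftLeafRows]

theorem isSparse_leftLeafRows (hD : IsCNAT D) (h : ¬HasInteractingLeft D) :
    IsSparse (leftLeafRows D) := by
  simp only [IsSparse, mem_leftLeafRows]
  refine ⟨fun r ⟨a, ha⟩ => by have := Fin.lt_def.1 ha.lt; omega, ?_⟩
  rintro q ⟨b, hq⟩ r ⟨a, hr⟩ hqr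
  have hle : q ≤ a := not_lt.1 fun haq =>
    h (hasInteractingLeft_iff.2 ⟨q, r, b, a, hq, hr, haq, Fin.lt_def.2 (by omega)⟩)
  have hlt := Fin.lt_def.1 hr.lt
  exact hr.ne_of_parent hD hq (le_antisymm (Fin.le_def.2 (by omega)) hle)

theorem card_leftLeafRows_add_transpose (hD : IsCNAT D) (hn : n ≠ 1) :
    (leftLeafRows D).card + (leftLeafRows D.transpose).card = n := by
  obtain ⟨π, hπ⟩ := hD.exists_isAssocPerm
  have hcompl : (leftLeafRows D)ᶜ.card = (leftLeafRows D.transpose).card :=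
    Finset.card_equiv π fun i => by
      rw [Finset.mem_compl, mem_leftLeafRows, mem_leftLeafRows,
        (hπ i).exists_hasLeftLeafFrom_transpose_iff hD hn]
  rw [← hcompl, Finset.card_add_card_compl, Fintype.card_fin]

theorem IsNonInteracting.exists_hasLeftLeafFrom_iff_odd {p : ℕ} {D : Grid (2 * p)}
    (h : IsNonInteracting D) (hD : IsCNAT D) (r : Fin (2 * p)) :
    (∃ a, HasLeftLeafFrom D r a) ↔ Odd (r : ℕ) := by
  have hrows := isSparse_leftLeafRows hD h.1
  have hcolumns := (isSparse_leftLeafRows hD.transpose h.2).two_mul_card_le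
  have hsum := card_leftLeafRows_add_transpose hD (by omega)
  have hcard : 2 * (leftLeafRows D).card = 2 * p := by
    have := hrows.two_mul_card_le
    omega
  rw [← mem_leftLeafRows, hrows.mem_iff_odd hcard]

end LeftLeafRows

section Parity

variable {p : ℕ} {k l : Fin p}

/-- The index `2 * k + b`, for `k < p` and `b < 2`. -/
def parityEquiv (p : ℕ) : Fin p × Fin 2 ≃ Fin (2 * p) :=
  finProdFinEquiv.trans (finCongr (Nat.mul_comm p 2))

/-- The index `2 * k`. -/
def evenIndex (k : Fin p) : Fin (2 * p) := parityEquiv p (k, 0)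

/-- The index `2 * k + 1`. -/
def oddIndex (k : Fin p) : Fin (2 * p) := parityEquiv p (k, 1)

theorem evenIndex_val (k : Fin p) : (evenIndex k : ℕ) = 2 * k := by
  simp [evenIndex, parityEquiv]

theorem oddIndex_val (k : Fin p) : (oddIndex k : ℕ) = 2 * k + 1 := by
  simp [oddIndex, parityEquiv, add_comm]

@[elab_as_elim]
theorem parityCases {motive : Fin (2 * p) → Prop} (even : ∀ k, motive (evenIndex k))
    (odd : ∀ k, motive (oddIndex k)) (i : Fin (2 * p)) : motive i := by
  obtain ⟨⟨k, b⟩, rfl⟩ := (parityEquiv p).surjective i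
  fin_cases b
  exacts [even k, odd k]

theorem evenIndex_lt_evenIndex : evenIndex k < evenIndex l ↔ k < l := by
  rw [Fin.lt_def, Fin.lt_def, evenIndex_val, evenIndex_val]
  omega

theorem oddIndex_lt_oddIndex : oddIndex k < oddIndex l ↔ k < l := by
  rw [Fin.lt_def, Fin.lt_def, oddIndex_val, oddIndex_val]
  omega

theorem evenIndex_lt_oddIndex : evenIndex k < oddIndex l ↔ k ≤ l := by
  rw [Fin.lt_def, Fin.le_def, evenIndex_val, oddIndex_val]
  omega

theorem oddIndex_lt_evenIndex : oddIndex k < evenIndex l ↔ k < l := by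
  rw [Fin.lt_def, Fin.lt_def, oddIndex_val, evenIndex_val]
  omega

theorem evenIndex_injective : Function.Injective (evenIndex (p := p)) := fun k l h => by
  simpa [evenIndex] using h

theorem oddIndex_injective : Function.Injective (oddIndex (p := p)) := fun k l h => by
  simpa [oddIndex] using h

theorem evenIndex_ne_oddIndex : evenIndex k ≠ oddIndex l := by
  simp [evenIndex, oddIndex]

end Parity

section Double

variable {p : ℕ} {E : Grid p} {k c : Fin p}

open Classical in
/-- The filling of size `2 * p` obtained from `E` by doubling all coordinates and attaching, to
every leaf of `E`, a new leaf in the next row and a new leaf in the next column. -/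
noncomputable def Grid.double (E : Grid p) : Grid (2 * p) := fun i j =>
  let x := (parityEquiv p).symm i
  let y := (parityEquiv p).symm j
  decide ((x.2 = 0 ∧ y.2 = 0 ∧ Dotted E x.1 y.1) ∨ (x.2 ≠ y.2 ∧ IsLeaf E x.1 y.1))

theorem dotted_double_parityEquiv (x y : Fin p × Fin 2) :
    Dotted E.double (parityEquiv p x) (parityEquiv p y) ↔
      (x.2 = 0 ∧ y.2 = 0 ∧ Dotted E x.1 y.1) ∨ (x.2 ≠ y.2 ∧ IsLeaf E x.1 y.1) := by
  classical
  exact decide_eq_true_iff.trans (by simp only [Equiv.symm_apply_apply])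

theorem dotted_double_even_even :
    Dotted E.double (evenIndex k) (evenIndex c) ↔ Dotted E k c := by
  simp [evenIndex, dotted_double_parityEquiv]

theorem dotted_double_odd_even :
    Dotted E.double (oddIndex k) (evenIndex c) ↔ IsLeaf E k c := by
  simp [evenIndex, oddIndex, dotted_double_parityEquiv]

theorem dotted_double_even_odd :
    Dotted E.double (evenIndex k) (oddIndex c) ↔ IsLeaf E k c := by
  simp [evenIndex, oddIndex, dotted_double_parityEquiv]

theorem not_dotted_double_odd_odd : ¬Dotted E.double (oddIndex k) (oddIndex c) := by
  simp [oddIndex, dotted_double_parityEquiv]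

theorem double_transpose : E.transpose.double = E.double.transpose :=
  funext₂ fun _ _ =>
    decide_eq_decide.2 (or_congr and_left_comm (and_congr ne_comm isLeaf_transpose))

theorem hasDotAbove_double_even_even (hd : Dotted E k c) :
    HasDotAbove E.double (evenIndex k) (evenIndex c) ↔ HasDotAbove E k c := by
  constructor
  · rintro ⟨r, hr, hrd⟩
    induction r using parityCases with
    | even m => exact ⟨m, evenIndex_lt_evenIndex.1 hr, dotted_double_even_even.1 hrd⟩
    | odd m =>
      exact absurd ⟨k, oddIndex_lt_evenIndex.1 hr, hd⟩ (dotted_double_odd_even.1 hrd).2.1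
  · rintro ⟨m, hm, hmd⟩
    exact ⟨evenIndex m, evenIndex_lt_evenIndex.2 hm, dotted_double_even_even.2 hmd⟩

theorem hasDotLeft_double_even_even (hd : Dotted E k c) :
    HasDotLeft E.double (evenIndex k) (evenIndex c) ↔ HasDotLeft E k c := by
  have := hasDotAbove_double_even_even (E := E.transpose) (k := c) (c := k) hd
  rwa [double_transpose] at this

theorem hasDotBelow_double_even_even :
    HasDotBelow E.double (evenIndex k) (evenIndex c) ↔ HasDotBelow E k c ∨ IsLeaf E k c := by
  constructor
  · rintro ⟨r, hr, hrd⟩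
    induction r using parityCases with
    | even m => exact Or.inl ⟨m, evenIndex_lt_evenIndex.1 hr, dotted_double_even_even.1 hrd⟩
    | odd m =>
      have hleaf := dotted_double_odd_even.1 hrd
      rcases (evenIndex_lt_oddIndex.1 hr).eq_or_lt with rfl | hlt
      · exact Or.inr hleaf
      · exact Or.inl ⟨m, hlt, hleaf.1⟩
  · rintro (⟨m, hm, hmd⟩ | hleaf)
    · exact ⟨evenIndex m, evenIndex_lt_evenIndex.2 hm, dotted_double_even_even.2 hmd⟩
    · exact ⟨oddIndex k, evenIndex_lt_oddIndex.2 le_rfl, dotted_double_odd_even.2 hleaf⟩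

theorem hasDotRight_double_even_even :
    HasDotRight E.double (evenIndex k) (evenIndex c) ↔ HasDotRight E k c ∨ IsLeaf E k c := by
  have := hasDotBelow_double_even_even (E := E.transpose) (k := c) (c := k)
  rwa [double_transpose, isLeaf_transpose] at this

theorem isLeaf_double_odd_even :
    IsLeaf E.double (oddIndex k) (evenIndex c) ↔ IsLeaf E k c := by
  refine ⟨fun h => dotted_double_odd_even.1 h.1, fun h => ⟨dotted_double_odd_even.2 h, ?_, ?_⟩⟩
  · rintro ⟨r, hr, hrd⟩
    induction r using parityCases with
    | even m => exact h.2.1 ⟨m, oddIndex_lt_evenIndex.1 hr, dotted_double_even_even.1 hrd⟩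
    | odd m => exact h.2.1 ⟨m, oddIndex_lt_oddIndex.1 hr, (dotted_double_odd_even.1 hrd).1⟩
  · rintro ⟨j, hj, hjd⟩
    induction j using parityCases with
    | even m => exact h.2.2 ⟨m, evenIndex_lt_evenIndex.1 hj, (dotted_double_odd_even.1 hjd).1⟩
    | odd m => exact not_dotted_double_odd_odd hjd

theorem isLeaf_double_even_odd :
    IsLeaf E.double (evenIndex k) (oddIndex c) ↔ IsLeaf E k c := by
  have := isLeaf_double_odd_even (E := E.transpose) (k := c) (c := k)
  rwa [double_transpose, isLeaf_transpose, isLeaf_transpose] at this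

theorem IsLeaf.hasDotAbove_double (h : IsLeaf E k c) :
    HasDotAbove E.double (oddIndex k) (evenIndex c) :=
  ⟨evenIndex k, evenIndex_lt_oddIndex.2 le_rfl, dotted_double_even_even.2 h.1⟩

theorem IsLeaf.not_hasDotLeft_double (h : IsLeaf E k c) :
    ¬HasDotLeft E.double (oddIndex k) (evenIndex c) := by
  rintro ⟨j, hj, hjd⟩
  induction j using parityCases with
  | even m =>
    rw [(dotted_double_odd_even.1 hjd).column_unique h] at hj
    exact hj.false
  | odd m => exact not_dotted_double_odd_odd hjd

theorem IsLeaf.hasDotLeft_double (h : IsLeaf E k c) :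
    HasDotLeft E.double (evenIndex k) (oddIndex c) := by
  have := (isLeaf_transpose.2 h).hasDotAbove_double
  rwa [double_transpose] at this

theorem IsLeaf.not_hasDotAbove_double (h : IsLeaf E k c) :
    ¬HasDotAbove E.double (evenIndex k) (oddIndex c) := by
  have := (isLeaf_transpose.2 h).not_hasDotLeft_double
  rwa [double_transpose] at this

theorem IsCNAT.exists_dotted_double_row (hE : IsCNAT E) (i : Fin (2 * p)) :
    ∃ j, Dotted E.double i j := by
  induction i using parityCases with
  | even k =>
    obtain ⟨c, hc⟩ := hE.2.2.1 k
    exact ⟨evenIndex c, dotted_double_even_even.2 hc⟩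
  | odd k =>
    obtain ⟨c, hc⟩ := hE.exists_isLeaf_row k
    exact ⟨evenIndex c, dotted_double_odd_even.2 hc⟩

theorem IsCNAT.xor_double (hE : IsCNAT E) {i j : Fin (2 * p)} (hd : Dotted E.double i j)
    (hne : ¬((i : ℕ) = 0 ∧ (j : ℕ) = 0)) :
    Xor (HasDotAbove E.double i j) (HasDotLeft E.double i j) := by
  induction i using parityCases with
  | even k =>
    induction j using parityCases with
    | even c =>
      have hdE := dotted_double_even_even.1 hd
      rw [hasDotAbove_double_even_even hdE, hasDotLeft_double_even_even hdE]
      exact hE.2.1 k c hdE (by simpa [evenIndex_val] using hne)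
    | odd c =>
      have h := dotted_double_even_odd.1 hd
      exact Or.inr ⟨h.hasDotLeft_double, h.not_hasDotAbove_double⟩
  | odd k =>
    induction j using parityCases with
    | even c =>
      have h := dotted_double_odd_even.1 hd
      exact Or.inl ⟨h.hasDotAbove_double, h.not_hasDotLeft_double⟩
    | odd c => exact absurd hd not_dotted_double_odd_odd

theorem IsCNAT.double (hE : IsCNAT E) : IsCNAT E.double := by
  refine ⟨fun i j hi hj => ?_, fun i j hd hne => ?_, hE.exists_dotted_double_row, fun j => ?_,
    fun i j hd => ?_⟩
  · induction i using parityCases <;> induction j using parityCases <;>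
      simp only [evenIndex_val, oddIndex_val] at hi hj <;> try omega
    exact dotted_double_even_even.2 (hE.1 _ _ (by omega) (by omega))
  · exact hE.xor_double hd hne
  · have := hE.transpose.exists_dotted_double_row j
    rwa [double_transpose] at this
  · induction i using parityCases with
    | even k =>
      induction j using parityCases with
      | even c =>
        rw [hasDotBelow_double_even_even, hasDotRight_double_even_even]
        have hdE := dotted_double_even_even.1 hd
        exact Or.inl <| (hE.2.2.2.2 k c hdE).elim (fun h => ⟨Or.inl h.1, Or.inl h.2⟩)
          fun h => ⟨Or.inr ⟨hdE, h⟩, Or.inr ⟨hdE, h⟩⟩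
      | odd c => exact Or.inr (isLeaf_double_even_odd.2 (dotted_double_even_odd.1 hd)).2
    | odd k =>
      induction j using parityCases with
      | even c => exact Or.inr (isLeaf_double_odd_even.2 (dotted_double_odd_even.1 hd)).2
      | odd c => exact absurd hd not_dotted_double_odd_odd

theorem IsCNAT.of_double (hD : IsCNAT E.double) : IsCNAT E := by
  obtain ⟨root, nonambiguous, rows, columns, complete⟩ := hD
  refine ⟨fun k c hk hc => ?_, fun k c hd hne => ?_, fun k => ?_, fun c => ?_, fun k c hd => ?_⟩
  · exact dotted_double_even_even.1 <|
      root _ _ (by rw [evenIndex_val, hk]) (by rw [evenIndex_val, hc])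
  · rw [← hasDotAbove_double_even_even hd, ← hasDotLeft_double_even_even hd]
    exact nonambiguous _ _ (dotted_double_even_even.2 hd) (by simpa [evenIndex_val] using hne)
  · obtain ⟨j, hj⟩ := rows (evenIndex k)
    induction j using parityCases with
    | even c => exact ⟨c, dotted_double_even_even.1 hj⟩
    | odd c => exact ⟨c, (dotted_double_even_odd.1 hj).1⟩
  · obtain ⟨i, hi⟩ := columns (evenIndex c)
    induction i using parityCases with
    | even k => exact ⟨k, dotted_double_even_even.1 hi⟩
    | odd k => exact ⟨k, (dotted_double_odd_even.1 hi).1⟩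
  · by_cases hleaf : IsLeaf E k c
    · exact Or.inr hleaf.2
    · have := complete _ _ (dotted_double_even_even.2 hd)
      simpa only [hasDotBelow_double_even_even, hasDotRight_double_even_even, hleaf,
        or_false] using this

theorem HasLeftLeafFrom.exists_of_double {r a : Fin (2 * p)}
    (h : HasLeftLeafFrom E.double r a) (hE : IsCNAT E) :
    ∃ k, r = oddIndex k ∧ a = evenIndex k := by
  obtain ⟨j, hleaf, -, hlt, hd, hgap⟩ := h
  induction r using parityCases with
  | even k =>
    induction j using parityCases with
    | even c =>
      have hdE := dotted_double_even_even.1 hleaf.1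
      refine absurd (hasDotBelow_double_even_even.2 ?_) hleaf.2.1
      exact (hE.2.2.2.2 k c hdE).imp And.left fun h => ⟨hdE, h⟩
    | odd c =>
      exact absurd ⟨a, hlt, hd⟩ (dotted_double_even_odd.1 hleaf.1).not_hasDotAbove_double
  | odd k =>
    induction j using parityCases with
    | even c =>
      have hk : ¬a < evenIndex k := fun hak =>
        hgap (evenIndex k) hak (evenIndex_lt_oddIndex.2 le_rfl)
          (dotted_double_even_even.2 (dotted_double_odd_even.1 hleaf.1).1)
      refine ⟨k, rfl, Fin.ext ?_⟩
      simp only [Fin.lt_def, evenIndex_val, oddIndex_val] at hlt hk ⊢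
      omega
    | odd c => exact absurd hleaf.1 not_dotted_double_odd_odd

theorem IsCNAT.isNonInteracting_double (hE : IsCNAT E) : IsNonInteracting E.double := by
  have not_hasInteractingLeft {E : Grid p} (hE : IsCNAT E) : ¬HasInteractingLeft E.double := by
    rw [hasInteractingLeft_iff]
    rintro ⟨q, r, b, a, hq, hr, haq, hqr⟩
    obtain ⟨k, rfl, -⟩ := hq.exists_of_double hE
    obtain ⟨l, rfl, rfl⟩ := hr.exists_of_double hE
    exact (evenIndex_lt_oddIndex.1 haq).not_gt (oddIndex_lt_oddIndex.1 hqr)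
  exact ⟨not_hasInteractingLeft hE, double_transpose ▸ not_hasInteractingLeft hE.transpose⟩

theorem IsCNAT.sign_double (hE : IsCNAT E) : E.double.sign = (-1) ^ p := by
  obtain ⟨π, hπ⟩ := hE.exists_isAssocPerm
  let ρ : Equiv.Perm (Fin p × Fin 2) :=
    (Equiv.prodCongrLeft fun _ => π) * Equiv.prodCongrRight fun _ => Equiv.swap 0 1
  have hρ : IsAssocPerm E.double ((parityEquiv p).permCongr ρ) := fun i => by
    induction i using parityCases with
    | even k =>
      have : (parityEquiv p).permCongr ρ (evenIndex k) = oddIndex (π k) := by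
        simp [ρ, evenIndex, oddIndex, Equiv.permCongr_apply]
      rw [this]
      exact isLeaf_double_even_odd.2 (hπ k)
    | odd k =>
      have : (parityEquiv p).permCongr ρ (oddIndex k) = evenIndex (π k) := by
        simp [ρ, evenIndex, oddIndex, Equiv.permCongr_apply]
      rw [this]
      exact isLeaf_double_odd_even.2 (hπ k)
  rw [hρ.sign_eq, Equiv.Perm.sign_permCongr, Equiv.Perm.sign_mul, Equiv.Perm.sign_prodCongrLeft,
    Equiv.Perm.sign_prodCongrRight]
  simp

end Double

section EvenPart

theorem eq_self_of_injective_of_le {α : Type*} [PartialOrder α] [WellFoundedLT α]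
    {f : α → α} (hf : Function.Injective f) (hle : ∀ a, f a ≤ a) (a : α) : f a = a := by
  induction a using WellFoundedLT.induction with
  | ind a ih => exact (hle a).eq_of_not_lt fun hlt => hlt.ne (hf (ih _ hlt))

variable {p : ℕ} {D : Grid (2 * p)} {k c : Fin p}

/-- The restriction of a filling to the rows and columns of even index. -/
def Grid.evenPart (D : Grid (2 * p)) : Grid p := fun k c => D (evenIndex k) (evenIndex c)

theorem evenPart_double (E : Grid p) : E.double.evenPart = E :=
  Grid.ext_dotted fun _ _ => dotted_double_even_even

namespace IsNonInteracting

-- Every odd row contains a left leaf, and none of these may lie strictly between the left leaf of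
-- row `2 * k + 1` and its parent, which hence lies in row `2 * k`.
theorem exists_isLeaf_odd_even (h : IsNonInteracting D) (hD : IsCNAT D) (k : Fin p) :
    ∃ c, IsLeaf D (oddIndex k) (evenIndex c) ∧ Dotted D (evenIndex k) (evenIndex c) := by
  have left_leaf (m : Fin p) : ∃ b, HasLeftLeafFrom D (oddIndex m) b :=
    (h.exists_hasLeftLeafFrom_iff_odd hD _).2 (by simp [oddIndex_val])
  obtain ⟨a, hk⟩ := left_leaf k
  have ha : a = evenIndex k := by
    have hlt := hk.lt
    induction a using parityCases with
    | even m =>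
      refine congrArg _ ((evenIndex_lt_oddIndex.1 hlt).eq_of_not_lt fun hmk => ?_)
      obtain ⟨b, hm⟩ := left_leaf m
      exact h.1 <| hasInteractingLeft_iff.2
        ⟨_, _, _, _, hm, hk, evenIndex_lt_oddIndex.2 le_rfl, oddIndex_lt_oddIndex.2 hmk⟩
    | odd m => exact absurd rfl (hk.ne_of_parent hD (left_leaf m).choose_spec)
  obtain ⟨j, hj, hp⟩ := id hk
  have hright := mt (hj.exists_hasLeftLeafFrom_transpose_iff hD (by omega)).1
    (not_not_intro ⟨a, hk⟩)
  rw [h.transpose.exists_hasLeftLeafFrom_iff_odd hD.transpose] at hright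
  induction j using parityCases with
  | even c => exact ⟨c, hj, ha ▸ hp.2.2.1⟩
  | odd c => exact absurd (by simp [oddIndex_val]) hright

theorem exists_isLeaf_even_odd (h : IsNonInteracting D) (hD : IsCNAT D) (c : Fin p) :
    ∃ k, IsLeaf D (evenIndex k) (oddIndex c) ∧ Dotted D (evenIndex k) (evenIndex c) := by
  obtain ⟨k, hleaf, hd⟩ := h.transpose.exists_isLeaf_odd_even hD.transpose c
  exact ⟨k, isLeaf_transpose.1 hleaf, hd⟩

-- If the left leaf of row `2 * k + 1` hangs from `(2 * k, 2 * σ k)` and the right leaf of column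
-- `2 * c + 1` hangs from `(2 * τ c, 2 * c)`, then `τ (σ k) ≤ k`, so that the injection `τ ∘ σ` is
-- the identity.
theorem exists_isLeaf_odd_even_and_even_odd (h : IsNonInteracting D) (hD : IsCNAT D)
    (k : Fin p) :
    ∃ c, IsLeaf D (oddIndex k) (evenIndex c) ∧ IsLeaf D (evenIndex k) (oddIndex c) ∧
      Dotted D (evenIndex k) (evenIndex c) := by
  choose σ hσ hσd using h.exists_isLeaf_odd_even hD
  choose τ hτ hτd using h.exists_isLeaf_even_odd hD
  have σ_injective : σ.Injective := fun a b hab =>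
    oddIndex_injective ((hσ a).row_unique (hab ▸ hσ b))
  have τ_injective : τ.Injective := fun a b hab =>
    oddIndex_injective ((hτ a).column_unique (hab ▸ hτ b))
  have hle (m : Fin p) : τ (σ m) ≤ m :=
    evenIndex_lt_oddIndex.1 <| ((hσ m).le_of_dotted_column (hτd (σ m))).lt_of_ne
      evenIndex_ne_oddIndex
  have hτσ : τ (σ k) = k :=
    eq_self_of_injective_of_le (τ_injective.comp σ_injective) hle k
  exact ⟨σ k, hσ k, by simpa only [hτσ] using hτ (σ k), hσd k⟩

theorem dotted_odd_even_iff (h : IsNonInteracting D) (hD : IsCNAT D) :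
    Dotted D (oddIndex k) (evenIndex c) ↔ IsLeaf D.evenPart k c := by
  obtain ⟨b, hodd, heven, hd⟩ := h.exists_isLeaf_odd_even_and_even_odd hD k
  have hleaf : IsLeaf D.evenPart k b := by
    refine ⟨hd, fun ⟨m, hm, hmd⟩ => ?_, fun ⟨m, hm, hmd⟩ => ?_⟩
    · exact (hodd.le_of_dotted_column hmd).not_gt (oddIndex_lt_evenIndex.2 hm)
    · exact (heven.le_of_dotted_row hmd).not_gt (oddIndex_lt_evenIndex.2 hm)
  constructor
  · intro hc
    have habove : HasDotAbove D (oddIndex k) (evenIndex b) :=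
      ⟨evenIndex k, evenIndex_lt_oddIndex.2 le_rfl, hd⟩
    rwa [evenIndex_injective (hodd.eq_of_dotted_row hD habove hc)]
  · intro hc
    rw [hc.column_unique hleaf]
    exact hodd.1

theorem dotted_even_odd_iff (h : IsNonInteracting D) (hD : IsCNAT D) :
    Dotted D (evenIndex k) (oddIndex c) ↔ IsLeaf D.evenPart k c :=
  (h.transpose.dotted_odd_even_iff hD.transpose).trans isLeaf_transpose

theorem not_dotted_odd_odd (h : IsNonInteracting D) (hD : IsCNAT D) :
    ¬Dotted D (oddIndex k) (oddIndex c) := by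
  obtain ⟨b, hodd, -, hd⟩ := h.exists_isLeaf_odd_even_and_even_odd hD k
  have habove : HasDotAbove D (oddIndex k) (evenIndex b) :=
    ⟨evenIndex k, evenIndex_lt_oddIndex.2 le_rfl, hd⟩
  exact fun hc => evenIndex_ne_oddIndex (hodd.eq_of_dotted_row hD habove hc).symm

theorem double_evenPart (h : IsNonInteracting D) (hD : IsCNAT D) : D.evenPart.double = D := by
  refine Grid.ext_dotted fun i j => ?_
  induction i using parityCases with
  | even k =>
    induction j using parityCases with
    | even c => exact dotted_double_even_even
    | odd c => exact dotted_double_even_odd.trans (h.dotted_even_odd_iff hD).symm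
  | odd k =>
    induction j using parityCases with
    | even c => exact dotted_double_odd_even.trans (h.dotted_odd_even_iff hD).symm
    | odd c => exact iff_of_false not_dotted_double_odd_odd (h.not_dotted_odd_odd hD)

theorem isCNAT_evenPart (h : IsNonInteracting D) (hD : IsCNAT D) : IsCNAT D.evenPart :=
  IsCNAT.of_double (by rwa [h.double_evenPart hD])

end IsNonInteracting

theorem sum_sign_cnats_two_mul (p : ℕ) :
    ∑ D ∈ cnats (2 * p), (D.sign : ℤ) = (-1) ^ p * Nat.card {D : Grid p // IsCNAT D} := by
  classical
  calc
    _ = ∑ D ∈ cnats (2 * p) with IsNonInteracting D, (D.sign : ℤ) := sum_sign_cnats (2 * p)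
    _ = ∑ _ ∈ cnats p, (-1) ^ p := by
      refine Finset.sum_nbij' Grid.evenPart Grid.double ?_ ?_ ?_ ?_ ?_ <;>
        simp only [Finset.mem_filter, mem_cnats]
      · exact fun D ⟨hD, h⟩ => h.isCNAT_evenPart hD
      · exact fun E hE => ⟨hE.double, hE.isNonInteracting_double⟩
      · exact fun D ⟨hD, h⟩ => h.double_evenPart hD
      · exact fun E _ => evenPart_double E
      · intro D ⟨hD, h⟩
        rw [← h.double_evenPart hD, (h.isCNAT_evenPart hD).sign_double, Units.val_pow_eq_pow_val,
          Units.val_neg, Units.val_one]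
    _ = (-1) ^ p * Nat.card {D : Grid p // IsCNAT D} := by
      rw [Finset.sum_const, nsmul_eq_mul, natCard_isCNAT, mul_comm]

end EvenPart

/-- For every `p ≥ 1`,
`T(2p; +1) = (T_{2p} + (-1)^p T_p) / 2` and `T(2p; -1) = (T_{2p} - (-1)^p T_p) / 2`. -/
theorem cnat_sign_count_even (p : ℕ) (hp : 1 ≤ p) :
    2 * (Nat.card {D : Grid (2 * p) // IsCNAT D ∧
          ∃ π : Equiv.Perm (Fin (2 * p)), IsAssocPerm D π ∧ Equiv.Perm.sign π = 1} : ℤ)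
        = (Nat.card {D : Grid (2 * p) // IsCNAT D} : ℤ)
          + (-1) ^ p * (Nat.card {D : Grid p // IsCNAT D} : ℤ) ∧
    2 * (Nat.card {D : Grid (2 * p) // IsCNAT D ∧
          ∃ π : Equiv.Perm (Fin (2 * p)), IsAssocPerm D π ∧ Equiv.Perm.sign π = -1} : ℤ)
        = (Nat.card {D : Grid (2 * p) // IsCNAT D} : ℤ)
          - (-1) ^ p * (Nat.card {D : Grid p // IsCNAT D} : ℤ) := by
  have hsum := sum_sign_cnats_two_mul p
  constructor
  · rw [two_mul_natCard_sign_eq, hsum, Units.val_one, one_mul]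
  · rw [two_mul_natCard_sign_eq, hsum, Units.val_neg, Units.val_one, neg_one_mul, ← sub_eq_add_neg]

end CNATf
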